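/- Let Φ ⊆ ℝ^m be a nonempty closed convex set, let V : ℝ^m → ℝ be differentiable with L_V-Lipschitz gradient (L_V > 0) and bounded below on Φ with V* := inf_{φ∈Φ} V(φ). Let δ ≥ 0, φ₀ ∈ Φ, and for k = 0, …, K−1 let g_k ∈ ℝ^m satisfy ‖g_k − ∇V(φ_k)‖ ≤ δ and set φ_{k+1} := proj_Φ(φ_k − η g_k) with step size η = 1/(4L_V). Then there exist k ∈ {0, …, K−1} and a vector v in the normal cone of Φ at φ_{k+1} such that ‖∇V(φ_{k+1}) + v‖² ≤ 50·L_V·(V(φ₀) − V*)/K + 27·δ². -/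

import Mathlib

open scoped RealInnerProductSpace

/-!
The optimality condition of the projection says that `η⁻¹ • (φₖ - φₖ₊₁) - gₖ` is normal to `Φ` at
`φₖ₊₁`. Tested against `φₖ` and combined with the quadratic upper bound on `V`, it gives a decrease
of `V` by at least `(η⁻¹ - L / 2) ‖φₖ₊₁ - φₖ‖² - δ ‖φₖ₊₁ - φₖ‖`; used as the normal vector in the
stationarity residual, it leaves a norm of at most `(L + η⁻¹) ‖φₖ₊₁ - φₖ‖ + δ`. For
`η = 1 / (4 * L)` the squared residual is therefore controlled by the decrease of `V` and `δ²`, and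
some step decreases `V` by no more than the average.
-/

section NormalCone

variable {E : Type*} [NormedAddCommGroup E] [InnerProductSpace ℝ E] {s : Set E}

/-- The normal cone of `s` at `x`, i.e. the subdifferential of the indicator function of `s`
when `x ∈ s`. The definition does not require `x ∈ s`. -/
def normalCone (s : Set E) (x : E) : Set E :=
  {v | ∀ y ∈ s, ⟪v, y - x⟫ ≤ 0}

theorem smul_mem_normalCone {x v : E} {c : ℝ} (hc : 0 ≤ c) (hv : v ∈ normalCone s x) :
    c • v ∈ normalCone s x := fun y hy => by
  rw [real_inner_smul_left]
  exact mul_nonpos_of_nonneg_of_nonpos hc (hv y hy)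

/-- `p` is a point of `s` nearest to `u`, i.e. a Euclidean projection of `u` onto `s`. As a
relation it needs neither existence nor uniqueness of the projection. -/
def IsNearestPoint (s : Set E) (u p : E) : Prop :=
  p ∈ s ∧ ∀ y ∈ s, ‖p - u‖ ≤ ‖y - u‖

theorem IsNearestPoint.sub_mem_normalCone {u p : E} (hs : Convex ℝ s)
    (hp : IsNearestPoint s u p) : u - p ∈ normalCone s p := by
  obtain ⟨hps, hmin⟩ := hp
  refine (norm_eq_iInf_iff_real_inner_le_zero hs hps).1 (le_antisymm ?_ ?_)
  · have : Nonempty s := ⟨p, hps⟩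
    exact le_ciInf fun y => by simpa only [norm_sub_rev u] using hmin y y.2
  · have hbelow : BddBelow (Set.range fun y : s => ‖u - y‖) :=
      ⟨0, Set.forall_mem_range.2 fun _ => norm_nonneg _⟩
    exact ciInf_le hbelow ⟨p, hps⟩

end NormalCone

section QuadraticUpperBound

theorem le_add_mul_add_sq_of_deriv_right_le_affine {f f' : ℝ → ℝ} {a b c d : ℝ} (hab : a ≤ b)
    (hf : ContinuousOn f (Set.Icc a b))
    (hf' : ∀ t ∈ Set.Ico a b, HasDerivWithinAt f (f' t) (Set.Ici t) t)
    (hbound : ∀ t ∈ Set.Ico a b, f' t ≤ c + d * (t - a)) :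
    f b ≤ f a + c * (b - a) + d / 2 * (b - a) ^ 2 := by
  let q : ℝ → ℝ := fun t => f a + c * (t - a) + d / 2 * (t - a) ^ 2
  have hq : ∀ t, HasDerivAt q (c + d * (t - a)) t := fun t => by
    have hsub : HasDerivAt (fun r => r - a) 1 t := (hasDerivAt_id t).sub_const a
    refine (((hsub.const_mul c).const_add (f a)).add
      ((hsub.pow 2).const_mul (d / 2))).congr_deriv ?_
    push_cast
    ring
  have hqa : f a ≤ q a := by simp only [q, sub_self]; linarith
  exact image_le_of_deriv_right_le_deriv_boundary hf hf' hqa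
    (fun t _ => (hq t).continuousAt.continuousWithinAt) (fun t _ => (hq t).hasDerivWithinAt)
    hbound (Set.right_mem_Icc.2 hab)

variable {E : Type*} [NormedAddCommGroup E] [InnerProductSpace ℝ E] [CompleteSpace E]
  {s : Set E} {V : E → ℝ} {V' : E → E} {x y : E}

theorem le_add_inner_add_sq_of_lipschitz_gradient {L : ℝ} (hs : StarConvex ℝ x s)
    (hV : ∀ z ∈ s, HasGradientWithinAt V (V' z) s z)
    (hLip : ∀ z ∈ s, ‖V' z - V' x‖ ≤ L * ‖z - x‖) (hy : y ∈ s) :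
    V y ≤ V x + ⟪V' x, y - x⟫ + L / 2 * ‖y - x‖ ^ 2 := by
  let γ : ℝ → E := AffineMap.lineMap x y
  have hγs : Set.MapsTo γ (Set.Icc 0 1) s :=
    Set.mapsTo_iff_image_subset.2 (segment_eq_image_lineMap ℝ x y ▸ hs.segment_subset hy)
  have hderiv : ∀ t ∈ Set.Icc (0 : ℝ) 1,
      HasDerivWithinAt (V ∘ γ) ⟪V' (γ t), y - x⟫ (Set.Icc 0 1) t := fun t ht =>
    (hV _ (hγs ht)).hasFDerivWithinAt.comp_hasDerivWithinAt t
      AffineMap.hasDerivWithinAt_lineMap hγs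
  have hslope : ∀ t ∈ Set.Ico (0 : ℝ) 1,
      ⟪V' (γ t), y - x⟫ ≤ ⟪V' x, y - x⟫ + L * ‖y - x‖ ^ 2 * (t - 0) := fun t ht => by
    have hdist : ‖γ t - x‖ = t * ‖y - x‖ := by
      rw [← dist_eq_norm, dist_lineMap_left, Real.norm_of_nonneg ht.1, dist_eq_norm_sub']
    rw [← sub_le_iff_le_add', ← inner_sub_left]
    calc ⟪V' (γ t) - V' x, y - x⟫ ≤ ‖V' (γ t) - V' x‖ * ‖y - x‖ := real_inner_le_norm _ _
      _ ≤ L * ‖γ t - x‖ * ‖y - x‖ := by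
        gcongr
        exact hLip _ (hγs (Set.Ico_subset_Icc_self ht))
      _ = L * ‖y - x‖ ^ 2 * (t - 0) := by rw [hdist]; ring
  have hle := le_add_mul_add_sq_of_deriv_right_le_affine zero_le_one
    (fun t ht => (hderiv t ht).continuousWithinAt)
    (fun t ht => (hderiv t (Set.Ico_subset_Icc_self ht)).mono_of_mem_nhdsWithin
      (Icc_mem_nhdsGE_of_mem ht)) hslope
  simpa [γ, mul_div_right_comm] using hle

end QuadraticUpperBound

section ProjectedGradientStep

variable {E : Type*} [NormedAddCommGroup E] [InnerProductSpace ℝ E]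
  {s : Set E} {V : E → ℝ} {V' : E → E} {x p g : E} {η L δ : ℝ}

/-- The normal vector to `s` at `p` produced by the projected gradient step from `x` to `p` with
step size `η` and search direction `g`: the projection residual `x - η • g - p` divided by `η`. -/
noncomputable def stepNormal (η : ℝ) (g x p : E) : E :=
  η⁻¹ • (x - p) - g

theorem stepNormal_mem_normalCone (hs : Convex ℝ s) (hη : 0 < η)
    (hp : IsNearestPoint s (x - η • g) p) : stepNormal η g x p ∈ normalCone s p := by
  have hrescale : stepNormal η g x p = η⁻¹ • (x - η • g - p) := by
    rw [stepNormal, sub_right_comm, smul_sub _ (x - p), inv_smul_smul₀ hη.ne']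
  rw [hrescale]
  exact smul_mem_normalCone (inv_nonneg.2 hη.le) (hp.sub_mem_normalCone hs)

theorem inner_le_neg_sq_of_isNearestPoint (hs : Convex ℝ s) (hη : 0 < η) (hx : x ∈ s)
    (hp : IsNearestPoint s (x - η • g) p) : ⟪g, p - x⟫ ≤ -(η⁻¹ * ‖p - x‖ ^ 2) := by
  have hnormal : ⟪stepNormal η g x p, x - p⟫ ≤ 0 := stepNormal_mem_normalCone hs hη hp x hx
  rw [stepNormal, inner_sub_left, real_inner_smul_left, real_inner_self_eq_norm_sq] at hnormal
  rw [← neg_sub x p, inner_neg_right, norm_neg]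
  linarith

theorem norm_gradient_add_stepNormal_le (hη : 0 < η) (hLip : ‖V' p - V' x‖ ≤ L * ‖p - x‖)
    (hg : ‖g - V' x‖ ≤ δ) :
    ‖V' p + stepNormal η g x p‖ ≤ (L + η⁻¹) * ‖p - x‖ + δ := by
  calc ‖V' p + stepNormal η g x p‖
      = ‖(V' p - V' x) - η⁻¹ • (p - x) - (g - V' x)‖ := by
        rw [stepNormal, ← neg_sub p x, smul_neg]
        abel_nf
    _ ≤ ‖V' p - V' x‖ + ‖η⁻¹ • (p - x)‖ + ‖g - V' x‖ :=
        (norm_sub_le _ _).trans (add_le_add_left (norm_sub_le _ _) _)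
    _ ≤ L * ‖p - x‖ + η⁻¹ * ‖p - x‖ + δ := by
        rw [norm_smul, Real.norm_of_nonneg (inv_nonneg.2 hη.le)]
        gcongr
    _ = (L + η⁻¹) * ‖p - x‖ + δ := by ring

variable [CompleteSpace E]

theorem sufficient_decrease_of_isNearestPoint (hs : Convex ℝ s)
    (hV : ∀ z ∈ s, HasGradientWithinAt V (V' z) s z)
    (hLip : ∀ z ∈ s, ‖V' z - V' x‖ ≤ L * ‖z - x‖) (hη : 0 < η) (hx : x ∈ s)
    (hg : ‖g - V' x‖ ≤ δ) (hp : IsNearestPoint s (x - η • g) p) :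
    (η⁻¹ - L / 2) * ‖p - x‖ ^ 2 - δ * ‖p - x‖ ≤ V x - V p := by
  have hquad : V p ≤ V x + ⟪V' x, p - x⟫ + L / 2 * ‖p - x‖ ^ 2 :=
    le_add_inner_add_sq_of_lipschitz_gradient (hs.starConvex hx) hV hLip hp.1
  have hinexact : ⟪V' x - g, p - x⟫ ≤ δ * ‖p - x‖ := by
    refine (real_inner_le_norm _ _).trans ?_
    rw [norm_sub_rev]
    gcongr
  have hstep : ⟪g, p - x⟫ ≤ -(η⁻¹ * ‖p - x‖ ^ 2) :=
    inner_le_neg_sq_of_isNearestPoint hs hη hx hp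
  rw [inner_sub_left] at hinexact
  linarith

theorem sq_norm_gradient_add_stepNormal_le (hs : Convex ℝ s)
    (hV : ∀ z ∈ s, HasGradientWithinAt V (V' z) s z)
    (hLip : ∀ z ∈ s, ‖V' z - V' x‖ ≤ L * ‖z - x‖) (hL : 0 < L) (hx : x ∈ s)
    (hg : ‖g - V' x‖ ≤ δ) (hp : IsNearestPoint s (x - (1 / (4 * L)) • g) p) :
    ‖V' p + stepNormal (1 / (4 * L)) g x p‖ ^ 2 ≤ 50 * L * (V x - V p) + 27 * δ ^ 2 := by
  have hη : 0 < 1 / (4 * L) := by positivity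
  have hη_inv : (1 / (4 * L))⁻¹ = 4 * L := by rw [one_div, inv_inv]
  have hres : ‖V' p + stepNormal (1 / (4 * L)) g x p‖ ≤ (L + 4 * L) * ‖p - x‖ + δ := by
    simpa only [hη_inv] using norm_gradient_add_stepNormal_le hη (hLip p hp.1) hg
  have hdec : (4 * L - L / 2) * ‖p - x‖ ^ 2 - δ * ‖p - x‖ ≤ V x - V p := by
    simpa only [hη_inv] using sufficient_decrease_of_isNearestPoint hs hV hLip hη hx hg hp
  calc ‖V' p + stepNormal (1 / (4 * L)) g x p‖ ^ 2 ≤ ((L + 4 * L) * ‖p - x‖ + δ) ^ 2 := by gcongr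
    _ ≤ 50 * L * ((4 * L - L / 2) * ‖p - x‖ ^ 2 - δ * ‖p - x‖) + 27 * δ ^ 2 := by
        linarith [sq_nonneg (5 * (L * ‖p - x‖) - δ), sq_nonneg δ]
    _ ≤ 50 * L * (V x - V p) + 27 * δ ^ 2 := by gcongr

end ProjectedGradientStep

theorem exists_lt_sub_succ_le_div {R : Type*} [Field R] [LinearOrder R] [IsStrictOrderedRing R]
    (f : ℕ → R) {K : ℕ} (hK : K ≠ 0) :
    ∃ k < K, f k - f (k + 1) ≤ (f 0 - f K) / K := by
  have hsum : ∑ k ∈ Finset.range K, (f k - f (k + 1)) ≤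
      ∑ _k ∈ Finset.range K, (f 0 - f K) / K := by
    rw [Finset.sum_range_sub', Finset.sum_const, Finset.card_range, nsmul_eq_mul,
      mul_div_cancel₀ _ (Nat.cast_ne_zero.2 hK)]
  obtain ⟨k, hk, hle⟩ := Finset.exists_le_of_sum_le (Finset.nonempty_range_iff.2 hK) hsum
  exact ⟨k, Finset.mem_range.1 hk, hle⟩

theorem inexact_projected_gradient_complexity_general {E : Type*} [NormedAddCommGroup E]
    [InnerProductSpace ℝ E] [CompleteSpace E] {Φ : Set E} (hΦ : Convex ℝ Φ) {V : E → ℝ}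
    {V' : E → E} (hV : ∀ x ∈ Φ, HasGradientWithinAt V (V' x) Φ x) {L δ : ℝ} (hL : 0 < L)
    (hLip : ∀ x ∈ Φ, ∀ y ∈ Φ, ‖V' x - V' y‖ ≤ L * ‖x - y‖) (hbdd : BddBelow (V '' Φ))
    {K : ℕ} (hK : K ≠ 0) {φ g : ℕ → E} (hφ0 : φ 0 ∈ Φ) (hg : ∀ k < K, ‖g k - V' (φ k)‖ ≤ δ)
    (hproj : ∀ k < K, IsNearestPoint Φ (φ k - (1 / (4 * L)) • g k) (φ (k + 1))) :
    ∃ k < K, ∃ v ∈ normalCone Φ (φ (k + 1)),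
      ‖V' (φ (k + 1)) + v‖ ^ 2 ≤ 50 * L * (V (φ 0) - sInf (V '' Φ)) / K + 27 * δ ^ 2 := by
  have hmem : ∀ k ≤ K, φ k ∈ Φ
    | 0, _ => hφ0
    | k + 1, hk => (hproj k hk).1
  obtain ⟨k, hk, hdec⟩ := exists_lt_sub_succ_le_div (V ∘ φ) hK
  have hφk : φ k ∈ Φ := hmem k hk.le
  refine ⟨k, hk, stepNormal (1 / (4 * L)) (g k) (φ k) (φ (k + 1)),
    stepNormal_mem_normalCone hΦ (by positivity) (hproj k hk), ?_⟩
  have hinf : sInf (V '' Φ) ≤ V (φ K) := csInf_le hbdd (Set.mem_image_of_mem V (hmem K le_rfl))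
  calc ‖V' (φ (k + 1)) + stepNormal (1 / (4 * L)) (g k) (φ k) (φ (k + 1))‖ ^ 2
      ≤ 50 * L * (V (φ k) - V (φ (k + 1))) + 27 * δ ^ 2 :=
        sq_norm_gradient_add_stepNormal_le hΦ hV (fun z hz => hLip z hz _ hφk) hL hφk (hg k hk)
          (hproj k hk)
    _ ≤ 50 * L * ((V (φ 0) - V (φ K)) / K) + 27 * δ ^ 2 := by gcongr; exact hdec
    _ ≤ 50 * L * ((V (φ 0) - sInf (V '' Φ)) / K) + 27 * δ ^ 2 := by gcongr
    _ = 50 * L * (V (φ 0) - sInf (V '' Φ)) / K + 27 * δ ^ 2 := by rw [mul_div_assoc]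

/-- improved complexity under smoothness. For the inexact projected gradient
method with step size η = 1/(4L_V) and gradient inexactness δ, some iterate φ_{k+1} admits
a normal-cone vector v with ‖∇V(φ_{k+1}) + v‖² ≤ 50·L_V·(V(φ₀) − V*)/K + 27·δ². -/
theorem inexact_projected_gradient_complexity {m : ℕ} (Φ : Set (EuclideanSpace ℝ (Fin m)))
    (hne : Φ.Nonempty) (hcl : IsClosed Φ) (hΦ : Convex ℝ Φ)
    (V : EuclideanSpace ℝ (Fin m) → ℝ)
    (V' : EuclideanSpace ℝ (Fin m) → EuclideanSpace ℝ (Fin m))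
    (hdiff : ∀ x, HasGradientAt V (V' x) x)
    (L_V : ℝ) (hLV : 0 < L_V)
    (hLip : ∀ x y, ‖V' x - V' y‖ ≤ L_V * ‖x - y‖)
    (hbdd : BddBelow (V '' Φ))
    (δ : ℝ) (hδ : 0 ≤ δ) (K : ℕ) (hK : 1 ≤ K)
    (φ : ℕ → EuclideanSpace ℝ (Fin m)) (g : ℕ → EuclideanSpace ℝ (Fin m))
    (hφ0 : φ 0 ∈ Φ)
    (hg : ∀ k < K, ‖g k - V' (φ k)‖ ≤ δ)
    (hproj : ∀ k < K, φ (k + 1) ∈ Φ ∧ ∀ y ∈ Φ,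
      ‖φ (k + 1) - (φ k - (1 / (4 * L_V)) • g k)‖ ≤
        ‖y - (φ k - (1 / (4 * L_V)) • g k)‖) :
    ∃ k < K, ∃ v : EuclideanSpace ℝ (Fin m),
      (∀ y ∈ Φ, ⟪v, y - φ (k + 1)⟫ ≤ 0) ∧
      ‖V' (φ (k + 1)) + v‖ ^ 2 ≤
        50 * L_V * (V (φ 0) - sInf (V '' Φ)) / K + 27 * δ ^ 2 :=
  inexact_projected_gradient_complexity_general hΦ
    (fun x _ => hasGradientWithinAt_iff_hasFDerivWithinAt.2 (hdiff x).hasFDerivAt.hasFDerivWithinAt)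
    hLV (fun x _ y _ => hLip x y) hbdd (Nat.one_le_iff_ne_zero.1 hK) hφ0 hg hproj
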